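/- Let S be a primitive substitution rule with dilation factor λ > 1 for a finite tile set P, with substitution map I_S and admissible set Ω_S = ∩_{k≥0} I_S^k(Ω_{ℰ,P}). Then I_S restricted to Ω_S is onto Ω_S; consequently, every admissible tiling T ∈ Ω_S admits a hierarchical sequence, i.e. a sequence (T^l)_{l≥0} of tilings with T^0 = T, T^l ∈ Ω_{ℰ,λ^l P}, and T^{l−1} = S_l(T^l) for all l ≥ 1. -/

import Mathlib

noncomputable section

/-- The Euclidean plane. -/
abbrev Plane : Type := EuclideanSpace ℝ (Fin 2)

/-- The closed unit ball of the plane. -/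
def unitDisk : Set Plane := Metric.closedBall 0 1

/-- A tile is a closed subset of the plane homeomorphic to the closed unit ball. -/
def IsTile (t : Set Plane) : Prop := IsClosed t ∧ Nonempty (t ≃ₜ unitDisk)

/-- Dilation of a subset of the plane by a factor `c`. -/
def scale (c : ℝ) (U : Set Plane) : Set Plane := (fun x : Plane => c • x) '' U

/-- `E` contains all translations of the plane. -/
def ContainsTranslations (E : Subgroup (Plane ≃ᵢ Plane)) : Prop :=
  ∀ v : Plane, ∃ g : Plane ≃ᵢ Plane, g ∈ E ∧ ∀ x, g x = v + x

/-- `q` is an `E`-copy of `p`. -/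
def ECopy (E : Subgroup (Plane ≃ᵢ Plane)) (p q : Set Plane) : Prop :=
  ∃ g : Plane ≃ᵢ Plane, g ∈ E ∧ q = g '' p

/-- A tiling of `Λ ⊆ ℝ²` that is `E`-generated by the prototiles `protos`:
a countable collection of `E`-copies of the prototiles covering `Λ` with pairwise
disjoint interiors. -/
structure PTiling (E : Subgroup (Plane ≃ᵢ Plane)) {n : ℕ}
    (protos : Fin n → Set Plane) (Λ : Set Plane) where
  tiles : Set (Set Plane)
  countable : tiles.Countable
  copies : ∀ t ∈ tiles, ∃ i, ECopy E (protos i) t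
  covers : ⋃₀ tiles = Λ
  disjInt : tiles.Pairwise fun t s => interior t ∩ interior s = ∅

/-- The prototiles dilated by `lam ^ l`. -/
def scaledP {n : ℕ} (p : Fin n → Set Plane) (lam : ℝ) (l : ℕ) : Fin n → Set Plane :=
  fun i => scale (lam ^ l) (p i)

/-- `T'` is the image of `T` under the substitution map `I_S`: each tile `t` of `T`
is dilated by `lam`, written as `g(λ pᵢ)` with `g ∈ E`, and replaced by the tiles of
`g(Sᵢ)`. -/
def SubstImage (E : Subgroup (Plane ≃ᵢ Plane)) {n : ℕ} (p : Fin n → Set Plane)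
    (lam : ℝ) (S : ∀ i, PTiling E p (scale lam (p i)))
    (T T' : PTiling E p Set.univ) : Prop :=
  ∃ D : Set Plane → Set (Set Plane),
    (∀ t ∈ T.tiles, ∃ g : Plane ≃ᵢ Plane, g ∈ E ∧ ∃ i,
        scale lam t = g '' scale lam (p i) ∧
        D t = (fun s => g '' s) '' (S i).tiles) ∧
    T'.tiles = ⋃ t ∈ T.tiles, D t

/-- A tiling `T` is admissible for `S`, i.e. `T ∈ Ω_S = ∩_{k ≥ 0} I_S^k(Ω_{E,P})`:
for every `k` there is a chain of `k` substitution steps ending at `T`. -/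
def Admissible (E : Subgroup (Plane ≃ᵢ Plane)) {n : ℕ} (p : Fin n → Set Plane)
    (lam : ℝ) (S : ∀ i, PTiling E p (scale lam (p i)))
    (T : PTiling E p Set.univ) : Prop :=
  ∀ k : ℕ, ∃ f : ℕ → PTiling E p Set.univ, f 0 = T ∧
    ∀ m < k, SubstImage E p lam S (f (m + 1)) (f m)

/-- `T = S_{l+1}(Tl1)`: the decomposition map at scale `l+1`; each tile
`g(λ^{l+1} pᵢ)` of `Tl1` is replaced by the tiles of `g(λ^l Sᵢ)`. -/
def DecompImage (E : Subgroup (Plane ≃ᵢ Plane)) {n : ℕ} (p : Fin n → Set Plane)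
    (lam : ℝ) (S : ∀ i, PTiling E p (scale lam (p i))) (l : ℕ) {Λ : Set Plane}
    (Tl1 : PTiling E (scaledP p lam (l + 1)) Λ)
    (T : PTiling E (scaledP p lam l) Λ) : Prop :=
  ∃ D : Set Plane → Set (Set Plane),
    (∀ t ∈ Tl1.tiles, ∃ g : Plane ≃ᵢ Plane, g ∈ E ∧ ∃ i,
        t = g '' scale (lam ^ (l + 1)) (p i) ∧
        D t = (fun s => g '' scale (lam ^ l) s) '' (S i).tiles) ∧
    T.tiles = ⋃ t ∈ Tl1.tiles, D t

/-- The number of `E`-copies of `q` among the tiles in `C`. -/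
def countCopies (E : Subgroup (Plane ≃ᵢ Plane)) (q : Set Plane)
    (C : Set (Set Plane)) : ℕ :=
  {t ∈ C | ECopy E q t}.ncard

/-- `L(A, T)` : the number of tiles that intersect `A`. -/
def tL (A : Set Plane) (C : Set (Set Plane)) : ℕ := {t ∈ C | (t ∩ A).Nonempty}.ncard

/-- `N(Δ, T)` : the number of tiles contained in `Δ`. -/
def tN (Δ : Set Plane) (C : Set (Set Plane)) : ℕ := {t ∈ C | t ⊆ Δ}.ncard

/-- `N(Δ, T, q)` : the number of tiles contained in `Δ` that are `E`-copies of `q`. -/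
def tNcopy (E : Subgroup (Plane ≃ᵢ Plane)) (q : Set Plane) (Δ : Set Plane)
    (C : Set (Set Plane)) : ℕ :=
  {t ∈ C | t ⊆ Δ ∧ ECopy E q t}.ncard

/-- A Jordan curve: the image of a continuous injective map from the circle `S¹`. -/
def IsJordanCurve (Γ : Set Plane) : Prop :=
  ∃ f : Metric.sphere (0 : Plane) 1 → Plane,
    Continuous f ∧ Function.Injective f ∧ Γ = Set.range f

/-- `Γ` is a Jordan curve bounding the topological closed disk `Δ`. -/
def BoundsDisk (Γ Δ : Set Plane) : Prop :=
  IsJordanCurve Γ ∧ Nonempty (Δ ≃ₜ unitDisk) ∧ frontier Δ = Γ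

/-!
If `T = T₀, T₁, T₂, …` is an infinite chain with `T_m = I_S(T_{m+1})`, then `T₁` is an admissible
preimage of `T`, and `T^l = λ^l T_l` is a hierarchical sequence. Admissibility only provides chains
of every finite length, so an infinite one is extracted by compactness, as the limit along a
nonprincipal ultrafilter: a tile belongs to level `m` of the limit if it belongs to level `m` of
almost all finite chains.

Such a limit is always a packing; that it covers the plane is proved by induction on `m`. If
level `m` of the limit covers the plane, then, by local finiteness, in a bounded region level `m` of
almost every chain uses only tiles from a finite part of the limit. So the collection of tiles
replacing a given tile of level `m + 1` takes finitely many values, the ultrafilter selects one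
of them, and the union of the selected collection recovers the tile of level `m + 1`.
-/

section UniformPackings

open Set Filter Metric Bornology
open scoped Topology

lemma exists_nonempty_inter_interior_of_subset_sUnion {X : Type*} [TopologicalSpace X]
    [BaireSpace X] {O : Set X} (hO : IsOpen O) (hne : O.Nonempty) {W : Set (Set X)}
    (hW : W.Countable) (hcl : ∀ t ∈ W, IsClosed t) (hcov : O ⊆ ⋃₀ W) :
    ∃ t ∈ W, (O ∩ interior t).Nonempty := by
  have hunion : ⋃₀ insert Oᶜ W = univ := by
    rwa [sUnion_insert, ← compl_subset_iff_union, compl_compl]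
  obtain ⟨x, hxO, hx⟩ := (dense_sUnion_interior_of_closed
    (forall_mem_insert.2 ⟨hO.isClosed_compl, hcl⟩) (hW.insert _) hunion).inter_open_nonempty
    O hO hne
  simp only [mem_iUnion, exists_prop] at hx
  obtain ⟨t, rfl | ht, hxt⟩ := hx
  · exact absurd hxO (interior_subset hxt)
  · exact ⟨t, ht, x, hxO, hxt⟩

lemma mem_of_subset_sUnion {X : Type*} [TopologicalSpace X] [BaireSpace X] {C W : Set (Set X)}
    (hC : C.PairwiseDisjoint interior) (hWC : W ⊆ C) (hW : W.Countable)
    (hcl : ∀ t ∈ W, IsClosed t) {s : Set X} (hs : s ∈ C) (hint : (interior s).Nonempty)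
    (hsW : s ⊆ ⋃₀ W) : s ∈ W := by
  obtain ⟨t, ht, hst⟩ := exists_nonempty_inter_interior_of_subset_sUnion isOpen_interior hint hW
    hcl (interior_subset.trans hsW)
  rwa [hC.elim hs (hWC ht) (not_disjoint_iff_nonempty_inter.2 hst)]

variable {X ι : Type*} [PseudoMetricSpace X]

/-- The set `t` has inner radius at least `r` and outer radius at most `R`, with respect to a common
center. -/
def HasRadii (r R : ℝ) (t : Set X) : Prop :=
  ∃ c, ball c r ⊆ t ∧ t ⊆ closedBall c R

lemma HasRadii.interior_nonempty {r R : ℝ} {t : Set X} (h : HasRadii r R t) (hr : 0 < r) :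
    (interior t).Nonempty := by
  obtain ⟨c, hc, -⟩ := h
  exact ⟨c, interior_maximal hc isOpen_ball (mem_ball_self hr)⟩

lemma HasRadii.image {Y : Type*} [PseudoMetricSpace Y] {r R : ℝ} {t : Set X} (h : HasRadii r R t)
    (g : X ≃ᵢ Y) : HasRadii r R (g '' t) := by
  obtain ⟨c, hin, hout⟩ := h
  refine ⟨g c, ?_, ?_⟩
  · rw [← g.image_ball]
    exact image_mono hin
  · rw [← g.image_closedBall]
    exact image_mono hout

lemma exists_forall_hasRadii [Finite ι] {p : ι → Set X} (hp : ∀ i, IsBounded (p i))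
    (hint : ∀ i, (interior (p i)).Nonempty) :
    ∃ r > 0, ∃ R, ∀ i, HasRadii r R (p i) := by
  choose c hc using hint
  have hsmall : ∀ᶠ r in 𝓝[>] (0 : ℝ), ∀ i, ball (c i) r ⊆ p i := eventually_all.2 fun i => by
    obtain ⟨ε, hε, hball⟩ := Metric.mem_nhds_iff.1 (mem_interior_iff_mem_nhds.1 (hc i))
    filter_upwards [Ioo_mem_nhdsGT hε] with r hr
    exact (ball_subset_ball hr.2.le).trans hball
  have hlarge : ∀ᶠ R in atTop, ∀ i, p i ⊆ closedBall (c i) R := eventually_all.2 fun i => by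
    obtain ⟨R₀, hR₀⟩ := (hp i).subset_closedBall (c i)
    filter_upwards [eventually_ge_atTop R₀] with R hR
    exact hR₀.trans (closedBall_subset_closedBall hR)
  obtain ⟨r, hr, hr0⟩ := (hsmall.and eventually_mem_nhdsWithin).exists
  obtain ⟨R, hR⟩ := hlarge.exists
  exact ⟨r, hr0, R, fun i => ⟨c i, hr i, hR i⟩⟩

/-- A packing (the members have pairwise disjoint interiors) by closed sets whose inner radii
are bounded below by `r > 0` and whose outer radii are bounded above by `R`. These bounds, common
to all tilings with given prototiles, are what makes tilings locally finite. -/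
structure IsUniformPacking (r R : ℝ) (C : Set (Set X)) : Prop where
  pos : 0 < r
  pairwiseDisjoint : C.PairwiseDisjoint interior
  isClosed : ∀ t ∈ C, IsClosed t
  hasRadii : ∀ t ∈ C, HasRadii r R t

namespace IsUniformPacking

variable {r R : ℝ} {C : Set (Set X)}

lemma interior_nonempty (hC : IsUniformPacking r R C) {t : Set X} (ht : t ∈ C) :
    (interior t).Nonempty :=
  (hC.hasRadii t ht).interior_nonempty hC.pos

lemma countable [TopologicalSpace.SeparableSpace X] (hC : IsUniformPacking r R C) : C.Countable :=
  hC.pairwiseDisjoint.countable_of_isOpen (fun _ _ => isOpen_interior)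
    fun _ ht => hC.interior_nonempty ht

lemma subset_of_sUnion_subset [TopologicalSpace.SeparableSpace X] [BaireSpace X]
    (hC : IsUniformPacking r R C) {B B' : Set (Set X)} (hB : B ⊆ C) (hB' : B' ⊆ C)
    (h : ⋃₀ B ⊆ ⋃₀ B') : B ⊆ B' := fun _ hs =>
  mem_of_subset_sUnion hC.pairwiseDisjoint hB' (hC.countable.mono hB')
    (fun t ht => hC.isClosed t (hB' ht)) (hB hs) (hC.interior_nonempty (hB hs))
    ((subset_sUnion_of_mem hs).trans h)

lemma finite_inter_nonempty [ProperSpace X] (hC : IsUniformPacking r R C) {A : Set X}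
    (hA : IsBounded A) : {t ∈ C | (t ∩ A).Nonempty}.Finite := by
  have htb : TotallyBounded (cthickening R A) :=
    hA.cthickening.isCompact_closure.totallyBounded.subset subset_closure
  obtain ⟨N, hN, hNcov⟩ := totallyBounded_iff.1 htb r hC.pos
  have hinterior : ∀ t ∈ {t ∈ C | (t ∩ A).Nonempty}, ∃ y ∈ N, y ∈ interior t := by
    rintro t ⟨ht, a, hat, haA⟩
    obtain ⟨c, hball, hsub⟩ := hC.hasRadii t ht
    have hc : c ∈ cthickening R A :=
      mem_cthickening_of_dist_le _ a R A haA (mem_closedBall'.1 (hsub hat))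
    obtain ⟨y, hyN, hcy⟩ := mem_iUnion₂.1 (hNcov hc)
    exact ⟨y, hyN, interior_maximal hball isOpen_ball (mem_ball_comm.1 hcy)⟩
  have hsubsingleton : ∀ y, {t ∈ C | y ∈ interior t}.Subsingleton := fun y t ht s hs =>
    hC.pairwiseDisjoint.elim_set ht.1 hs.1 y ht.2 hs.2
  refine (hN.biUnion fun y _ => (hsubsingleton y).finite).subset fun t ht => ?_
  obtain ⟨y, hyN, hyt⟩ := hinterior t ht
  exact mem_biUnion hyN ⟨ht.1, hyt⟩

end IsUniformPacking

/-! ### Limits of packings -/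

lemma exists_mem_of_mem_liminf {α : Type*} {C : ι → Set α} {U : Filter ι} [U.NeBot] {a : α}
    (ha : a ∈ liminf C U) : ∃ i, a ∈ C i :=
  (mem_liminf_iff_eventually_mem.1 ha).exists

lemma pairwise_liminf {α : Type*} {C : ι → Set α} {U : Filter ι} [U.NeBot] {rel : α → α → Prop}
    (hC : ∀ i, (C i).Pairwise rel) : (liminf C U).Pairwise rel := by
  intro a ha b hb hab
  rw [mem_liminf_iff_eventually_mem] at ha hb
  obtain ⟨i, hai, hbi⟩ := (ha.and hb).exists
  exact hC i hai hbi hab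

namespace IsUniformPacking

variable {r R : ℝ} {C : ι → Set (Set X)}

lemma liminf {U : Filter ι} [U.NeBot] (hC : ∀ i, IsUniformPacking r R (C i)) :
    IsUniformPacking r R (liminf C U) where
  pos := (hC U.nonempty_of_neBot.some).pos
  pairwiseDisjoint := pairwise_liminf fun i => (hC i).pairwiseDisjoint
  isClosed t ht := (exists_mem_of_mem_liminf ht).elim fun i => (hC i).isClosed t
  hasRadii t ht := (exists_mem_of_mem_liminf ht).elim fun i => (hC i).hasRadii t

lemma exists_finite_subset_liminf [ProperSpace X] {U : Filter ι} [U.NeBot]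
    (hC : ∀ i, IsUniformPacking r R (C i)) (hcov : ⋃₀ Filter.liminf C U = univ) {A : Set X}
    (hA : IsBounded A) :
    ∃ W ⊆ Filter.liminf C U, W.Finite ∧ ∀ᶠ i in U, ∀ s ∈ C i, s ⊆ A → s ∈ W := by
  have hfin := (IsUniformPacking.liminf hC (U := U)).finite_inter_nonempty hA
  refine ⟨_, sep_subset _ _, hfin, ?_⟩
  have hev : ∀ᶠ i in U, {t ∈ Filter.liminf C U | (t ∩ A).Nonempty} ⊆ C i :=
    (eventually_all_finite hfin).2 fun t ht => mem_liminf_iff_eventually_mem.1 ht.1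
  filter_upwards [hev] with i hi s hs hsA
  refine mem_of_subset_sUnion (hC i).pairwiseDisjoint hi hfin.countable
    (fun t ht => (hC i).isClosed t (hi ht)) hs ((hC i).interior_nonempty hs) fun x hx => ?_
  obtain ⟨t, ht, hxt⟩ := hcov.ge (mem_univ x)
  exact ⟨t, ⟨ht, x, hxt, hsA hx⟩, hxt⟩

lemma exists_subset_liminf_eventually [ProperSpace X] {U : Ultrafilter ι}
    (hC : ∀ i, IsUniformPacking r R (C i)) (hcov : ⋃₀ Filter.liminf C U = univ) {A : Set X}
    (hA : IsBounded A) {Q : ι → Set (Set X) → Prop}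
    (hQ : ∀ᶠ i in U, ∃ B ⊆ C i, ⋃₀ B ⊆ A ∧ Q i B) :
    ∃ B ⊆ Filter.liminf C U, ∀ᶠ i in U, Q i B := by
  obtain ⟨W, hWC, hW, hmem⟩ := exists_finite_subset_liminf hC hcov hA
  have hQW : ∀ᶠ i in U, ∃ B ∈ 𝒫 W, Q i B := by
    filter_upwards [hQ, hmem] with i ⟨B, hBC, hBA, hB⟩ hi
    exact ⟨B, fun s hs => hi s (hBC hs) ((subset_sUnion_of_mem hs).trans hBA), hB⟩
  obtain ⟨B, hBW, hB⟩ := (Ultrafilter.eventually_exists_mem_iff hW.finite_subsets).1 hQW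
  exact ⟨B, hBW.trans hWC, hB⟩

end IsUniformPacking

end UniformPackings

section Tilings

open Set Filter Metric Bornology
open scoped Pointwise

/-! ### Dilations and isometries -/

lemma scale_eq_smul (c : ℝ) (U : Set Plane) : scale c U = c • U := rfl

lemma interior_isometryEquiv_image {X Y : Type*} [PseudoEMetricSpace X] [PseudoEMetricSpace Y]
    (g : X ≃ᵢ Y) (U : Set X) :
    interior (g '' U) = g '' interior U :=
  (g.toHomeomorph.image_interior U).symm

variable {E : Subgroup (Plane ≃ᵢ Plane)}

/-- Since isometries are affine, conjugating `g` by a dilation only changes its translation part. -/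
lemma exists_image_smul_eq_smul_image (hE : ContainsTranslations E) {g : Plane ≃ᵢ Plane}
    (hg : g ∈ E) (c : ℝ) : ∃ g' ∈ E, ∀ U : Set Plane, g' '' (c • U) = c • g '' U := by
  obtain ⟨τ, hτ, hτx⟩ := hE (c • g 0 - g 0)
  have hconj : ∀ x, (τ * g) (c • x) = c • g x := fun x => by
    have hlin := g.toRealLinearIsometryEquiv.map_smul c x
    simp only [IsometryEquiv.toRealLinearIsometryEquiv_apply] at hlin
    rw [IsometryEquiv.mul_apply, hτx, sub_eq_iff_eq_add.1 hlin, smul_sub]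
    abel
  refine ⟨τ * g, E.mul_mem hτ hg, fun U => ?_⟩
  simp only [← image_smul, image_image, hconj]

/-! ### Tilings -/

lemma IsTile.isCompact {t : Set Plane} (ht : IsTile t) : IsCompact t := by
  obtain ⟨e⟩ := ht.2
  have : CompactSpace unitDisk := isCompact_iff_compactSpace.1 (isCompact_closedBall 0 1)
  have : CompactSpace t := e.symm.compactSpace
  exact isCompact_iff_compactSpace.2 this

lemma ECopy.isClosed {q t : Set Plane} (h : ECopy E q t) (hq : IsClosed q) : IsClosed t := by
  obtain ⟨g, -, rfl⟩ := h
  exact g.toHomeomorph.isClosedMap _ hq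

variable {n : ℕ} {p : Fin n → Set Plane}

lemma exists_isUniformPacking_tiles (E : Subgroup (Plane ≃ᵢ Plane)) (hp : ∀ i, IsCompact (p i))
    (hint : ∀ i, (interior (p i)).Nonempty) :
    ∃ r R : ℝ, ∀ {Λ : Set Plane} (T : PTiling E p Λ), IsUniformPacking r R T.tiles := by
  obtain ⟨r, hr, R, hrR⟩ := exists_forall_hasRadii (fun i => (hp i).isBounded) hint
  refine ⟨r, R, fun T => ⟨hr, fun t ht s hs hts => ?_, fun t ht => ?_, fun t ht => ?_⟩⟩
  · exact disjoint_iff_inter_eq_empty.2 (T.disjInt ht hs hts)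
  · obtain ⟨i, hi⟩ := T.copies t ht
    exact hi.isClosed (hp i).isClosed
  · obtain ⟨i, g, -, rfl⟩ := T.copies t ht
    exact (hrR i).image g

namespace PTiling

lemma ext_tiles {Λ : Set Plane} {T T' : PTiling E p Λ} (h : T.tiles = T'.tiles) : T = T' := by
  cases T
  cases T'
  congr

/-- The tiling consisting of the tiles that belong to almost all of the tilings `f i` with respect
to the filter `U`. -/
def liminf {ι : Type*} {Λ : Set Plane} (f : ι → PTiling E p Λ) (U : Filter ι) [U.NeBot]
    (hcount : (Filter.liminf (fun i => (f i).tiles) U).Countable)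
    (hcov : ⋃₀ Filter.liminf (fun i => (f i).tiles) U = Λ) : PTiling E p Λ where
  tiles := Filter.liminf (fun i => (f i).tiles) U
  countable := hcount
  copies t ht := (exists_mem_of_mem_liminf ht).elim fun i => (f i).copies t
  covers := hcov
  disjInt := pairwise_liminf fun i => (f i).disjInt

/-- The tiling `c T`, by copies of the prototiles dilated by `c`. -/
def dilate (hE : ContainsTranslations E) {c : ℝ} (hc : c ≠ 0) (T : PTiling E p univ) :
    PTiling E (fun i => scale c (p i)) univ where
  tiles := scale c '' T.tiles
  countable := T.countable.image _
  copies := by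
    rintro _ ⟨t, ht, rfl⟩
    obtain ⟨i, g, hg, rfl⟩ := T.copies t ht
    obtain ⟨g', hg', hconj⟩ := exists_image_smul_eq_smul_image hE hg c
    exact ⟨i, g', hg', (hconj _).symm⟩
  covers := by
    change ⋃₀ ((c • ·) '' T.tiles) = univ
    rw [sUnion_image, ← smul_set_iUnion₂, ← sUnion_eq_biUnion, T.covers, smul_set_univ₀ hc]
  disjInt := by
    rintro _ ⟨t, ht, rfl⟩ _ ⟨s, hs, rfl⟩ hts
    have hne : t ≠ s := fun h => hts (h ▸ rfl)
    simp only [scale_eq_smul, interior_smul₀ hc]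
    rw [← smul_set_inter₀ hc, T.disjInt ht hs hne, smul_set_empty]

end PTiling

/-! ### Blocks -/

variable {lam : ℝ} {S : ∀ i, PTiling E p (scale lam (p i))}

/-- `B` is a collection of tiles by which the substitution rule `S` may replace the dilated tile
`λ t`: the block `g(Sᵢ)`, where `λ t = g(λ pᵢ)`. It depends on the choice of `g` and `i`. -/
def IsBlock (S : ∀ i, PTiling E p (scale lam (p i))) (t : Set Plane) (B : Set (Set Plane)) : Prop :=
  ∃ g : Plane ≃ᵢ Plane, g ∈ E ∧ ∃ i,
    scale lam t = g '' scale lam (p i) ∧ B = (fun s => g '' s) '' (S i).tiles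

namespace IsBlock

variable {t t' : Set Plane} {B : Set (Set Plane)}

lemma sUnion_eq (h : IsBlock S t B) : ⋃₀ B = scale lam t := by
  obtain ⟨g, -, i, ht, rfl⟩ := h
  rw [ht, sUnion_image, ← image_iUnion₂, ← sUnion_eq_biUnion, (S i).covers]

lemma tile_unique (hlam : lam ≠ 0) (h : IsBlock S t B) (h' : IsBlock S t' B) : t = t' :=
  MulAction.injective₀ hlam (h.sUnion_eq.symm.trans h'.sUnion_eq)

lemma isBounded_sUnion (h : IsBlock S t B) (hp : ∀ i, IsBounded (p i)) : IsBounded (⋃₀ B) := by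
  rw [h.sUnion_eq]
  obtain ⟨g, -, i, ht, -⟩ := h
  rw [ht]
  exact g.isometry.lipschitz.isBounded_image ((hp i).smul₀ lam)

end IsBlock

lemma exists_diam_sUnion_block_le (S : ∀ i, PTiling E p (scale lam (p i))) :
    ∃ d, ∀ t B, IsBlock S t B → diam (⋃₀ B) ≤ d := by
  obtain ⟨d, hd⟩ := Finite.exists_le fun i => diam (scale lam (p i))
  refine ⟨d, fun t B h => ?_⟩
  rw [h.sUnion_eq]
  obtain ⟨g, -, i, ht, -⟩ := h
  rw [ht, g.isometry.diam_image]
  exact hd i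

/-- `F` arises from `G` by replacing every tile with a block. This is `SubstImage` without a choice
function for the blocks and for arbitrary collections of tiles, a form that passes to limits. -/
structure IsBlockDecomposition (S : ∀ i, PTiling E p (scale lam (p i)))
    (G F : Set (Set Plane)) : Prop where
  exists_block : ∀ t ∈ G, ∃ B ⊆ F, IsBlock S t B
  exists_parent : ∀ s ∈ F, ∃ t ∈ G, ∃ B ⊆ F, IsBlock S t B ∧ s ∈ B

lemma SubstImage.isBlockDecomposition {T' T : PTiling E p univ} (h : SubstImage E p lam S T' T) :
    IsBlockDecomposition S T'.tiles T.tiles := by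
  obtain ⟨D, hD, hT⟩ := h
  have hsub : ∀ t ∈ T'.tiles, D t ⊆ T.tiles := fun t ht => hT ▸ subset_biUnion_of_mem ht
  refine ⟨fun t ht => ⟨D t, hsub t ht, hD t ht⟩, fun s hs => ?_⟩
  rw [hT, mem_iUnion₂] at hs
  obtain ⟨t, ht, hst⟩ := hs
  exact ⟨t, ht, D t, hsub t ht, hD t ht, hst⟩

namespace IsBlockDecomposition

lemma substImage {T' T : PTiling E p univ} {r R : ℝ}
    (h : IsBlockDecomposition S T'.tiles T.tiles) (hT : IsUniformPacking r R T.tiles) :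
    SubstImage E p lam S T' T := by
  choose! D hDT hD using h.exists_block
  refine ⟨D, hD, Subset.antisymm (fun s hs => ?_) (iUnion₂_subset hDT)⟩
  obtain ⟨t, ht, B, hBT, hB, hsB⟩ := h.exists_parent s hs
  have hBD : B ⊆ D t := hT.subset_of_sUnion_subset hBT (hDT t ht)
    (hB.sUnion_eq.trans (hD t ht).sUnion_eq.symm).le
  exact mem_biUnion ht (hBD hsB)

lemma sUnion_eq_univ (hlam : lam ≠ 0) {G F : Set (Set Plane)} (h : IsBlockDecomposition S G F)
    (hF : ⋃₀ F = univ) : ⋃₀ G = univ := by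
  refine eq_univ_of_forall fun x => ?_
  obtain ⟨s, hs, hxs⟩ := hF.ge (mem_univ (lam • x))
  obtain ⟨t, ht, B, -, hB, hsB⟩ := h.exists_parent s hs
  have hx : lam • x ∈ lam • t := hB.sUnion_eq.le (mem_sUnion_of_mem hxs hsB)
  exact ⟨t, ht, (smul_mem_smul_set_iff₀ hlam t x).1 hx⟩

lemma liminf {ι : Type*} (hlam : lam ≠ 0) (hp : ∀ i, IsBounded (p i)) {U : Ultrafilter ι}
    {F G : ι → Set (Set Plane)} {r R : ℝ} (hF : ∀ i, IsUniformPacking r R (F i))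
    (hGF : ∀ᶠ i in U, IsBlockDecomposition S (G i) (F i)) (hcov : ⋃₀ liminf F U = univ) :
    IsBlockDecomposition S (liminf G U) (liminf F U) where
  exists_block t ht := by
    rw [mem_liminf_iff_eventually_mem] at ht
    have hblock : ∀ᶠ i in U, ∃ B ⊆ F i, IsBlock S t B := by
      filter_upwards [ht, hGF] with i hti hi using hi.exists_block t hti
    obtain ⟨i, B₀, -, hB₀⟩ := hblock.exists
    obtain ⟨B, hBF, hB⟩ := IsUniformPacking.exists_subset_liminf_eventually hF hcov
      (hB₀.isBounded_sUnion hp) (Q := fun _ => IsBlock S t) (by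
        filter_upwards [hblock] with i ⟨B, hBF, hB⟩
        exact ⟨B, hBF, (hB.sUnion_eq.trans hB₀.sUnion_eq.symm).le, hB⟩)
    exact ⟨B, hBF, hB.exists.choose_spec⟩
  exists_parent s hs := by
    obtain ⟨d, hd⟩ := exists_diam_sUnion_block_le S
    obtain ⟨c, hc⟩ := ((IsUniformPacking.liminf hF).interior_nonempty hs).mono interior_subset
    rw [mem_liminf_iff_eventually_mem] at hs
    obtain ⟨B, hBF, hB⟩ := IsUniformPacking.exists_subset_liminf_eventually hF hcov
      (isBounded_closedBall (x := c) (r := d))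
      (Q := fun i B => s ∈ B ∧ ∃ t ∈ G i, IsBlock S t B) (by
        filter_upwards [hs, hGF] with i hsi hi
        obtain ⟨t, ht, B, hBF, hB, hsB⟩ := hi.exists_parent s hsi
        refine ⟨B, hBF, fun x hx => ?_, hsB, t, ht, hB⟩
        exact (dist_le_diam_of_mem (hB.isBounded_sUnion hp) hx
          (mem_sUnion_of_mem hc hsB)).trans (hd t B hB))
    obtain ⟨i, hsB, t, -, ht⟩ := hB.exists
    refine ⟨t, mem_liminf_iff_eventually_mem.2 ?_, B, hBF, ht, hsB⟩
    filter_upwards [hB] with j ⟨_, t', ht'G, ht'⟩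
    rwa [ht.tile_unique hlam ht']

end IsBlockDecomposition

/-! ### Infinite chains and hierarchical sequences -/

lemma Admissible.exists_chain (hp : ∀ i, IsCompact (p i)) (hint : ∀ i, (interior (p i)).Nonempty)
    (hlam : lam ≠ 0) {T : PTiling E p univ} (hT : Admissible E p lam S T) :
    ∃ f : ℕ → PTiling E p univ, f 0 = T ∧ ∀ m, SubstImage E p lam S (f (m + 1)) (f m) := by
  obtain ⟨r, R, hpack⟩ := exists_isUniformPacking_tiles E hp hint
  choose f hf0 hf using hT
  let U : Ultrafilter ℕ := hyperfilter ℕ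
  let L : ℕ → Set (Set Plane) := fun m => Filter.liminf (fun k => (f k m).tiles) U
  have hL0 : L 0 = T.tiles := by simp only [L, hf0, liminf_const]
  have hdec : ∀ m, ⋃₀ L m = univ → IsBlockDecomposition S (L (m + 1)) (L m) := fun m hm => by
    refine .liminf hlam (fun i => (hp i).isBounded) (fun k => hpack (f k m)) ?_ hm
    filter_upwards [Nat.hyperfilter_le_atTop (eventually_gt_atTop m)] with k hk
    exact (hf k m hk).isBlockDecomposition
  have hcov : ∀ m, ⋃₀ L m = univ := fun m => by
    induction m with
    | zero => rw [hL0, T.covers]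
    | succ m ih => exact (hdec m ih).sUnion_eq_univ hlam ih
  exact ⟨fun m => .liminf (f · m) U (IsUniformPacking.liminf fun k => hpack (f k m)).countable
    (hcov m), PTiling.ext_tiles hL0, fun m => (hdec m (hcov m)).substImage (hpack _)⟩

lemma SubstImage.decompImage (hE : ContainsTranslations E) (hlam : lam ≠ 0)
    {T' T : PTiling E p univ} (h : SubstImage E p lam S T' T) (l : ℕ) :
    DecompImage E p lam S l (T'.dilate hE (pow_ne_zero (l + 1) hlam))
      (T.dilate hE (pow_ne_zero l hlam)) := by
  obtain ⟨D, hD, hT⟩ := h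
  have hinv : ∀ t : Set Plane, (lam ^ (l + 1))⁻¹ • scale (lam ^ (l + 1)) t = t :=
    inv_smul_smul₀ (pow_ne_zero _ hlam)
  refine ⟨fun t => scale (lam ^ l) '' D ((lam ^ (l + 1))⁻¹ • t), ?_, ?_⟩
  · rintro _ ⟨t, ht, rfl⟩
    obtain ⟨g, hg, i, hti, hDt⟩ := hD t ht
    obtain ⟨g', hg', hconj⟩ := exists_image_smul_eq_smul_image hE hg (lam ^ l)
    have hpow : ∀ q, scale (lam ^ (l + 1)) q = lam ^ l • scale lam q := fun q => by
      rw [scale_eq_smul, scale_eq_smul, smul_smul, pow_succ]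
    refine ⟨g', hg', i, ?_, ?_⟩
    · rw [hpow, hpow, hconj, hti]
    · beta_reduce
      rw [hinv, hDt, image_image]
      simp only [scale_eq_smul, hconj]
  · change scale (lam ^ l) '' T.tiles = ⋃ t ∈ scale (lam ^ (l + 1)) '' T'.tiles, _
    simp only [biUnion_image, hT, image_iUnion₂, hinv]

theorem stmt_11_general (hE : ContainsTranslations E) (hp : ∀ i, IsCompact (p i))
    (hint : ∀ i, (interior (p i)).Nonempty) (hlam : lam ≠ 0) {T : PTiling E p univ}
    (hT : Admissible E p lam S T) :
    (∃ T' : PTiling E p univ, Admissible E p lam S T' ∧ SubstImage E p lam S T' T) ∧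
      ∃ Tseq : ∀ l : ℕ, PTiling E (scaledP p lam l) univ, (Tseq 0).tiles = T.tiles ∧
        ∀ l : ℕ, DecompImage E p lam S l (Tseq (l + 1)) (Tseq l) := by
  obtain ⟨f, rfl, hf⟩ := hT.exists_chain hp hint hlam
  constructor
  · exact ⟨f 1, fun k => ⟨fun m => f (m + 1), rfl, fun m _ => hf (m + 1)⟩, hf 0⟩
  · refine ⟨fun l => (f l).dilate hE (pow_ne_zero l hlam), ?_,
      fun l => (hf l).decompImage hE hlam l⟩
    change (lam ^ 0 • ·) '' (f 0).tiles = (f 0).tiles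
    simp only [pow_zero, one_smul, image_id']

/-! ### Primitive substitution rules -/

lemma PTiling.exists_interior_nonempty {Λ : Set Plane} (T : PTiling E p Λ)
    (hΛ : (interior Λ).Nonempty) (hp : ∀ i, IsClosed (p i)) : ∃ i, (interior (p i)).Nonempty := by
  have hcl : ∀ t ∈ T.tiles, IsClosed t := fun t ht =>
    (T.copies t ht).elim fun i hi => hi.isClosed (hp i)
  obtain ⟨t, ht, hint⟩ := exists_nonempty_inter_interior_of_subset_sUnion isOpen_interior hΛ
    T.countable hcl (interior_subset.trans T.covers.ge)
  obtain ⟨i, g, -, rfl⟩ := T.copies t ht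
  have hgi := hint.mono inter_subset_right
  rw [interior_isometryEquiv_image] at hgi
  exact ⟨i, image_nonempty.1 hgi⟩

lemma interior_nonempty_of_countCopies_ne_zero (hlam : lam ≠ 0) {q q' : Set Plane}
    (T : PTiling E p (scale lam q')) (hcount : countCopies E q T.tiles ≠ 0)
    (hq : (interior q).Nonempty) : (interior q').Nonempty := by
  obtain ⟨t, ht, g, -, rfl⟩ := nonempty_of_ncard_ne_zero hcount
  have hsub : g '' interior q ⊆ lam • interior q' := by
    rw [← interior_isometryEquiv_image, ← interior_smul₀ hlam]
    exact interior_mono ((subset_sUnion_of_mem ht).trans T.covers.le)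
  exact image_nonempty.1 ((hq.image g).mono hsub)

lemma of_matrix_pow_apply_ne_zero {ι α : Type*} [Fintype ι] [DecidableEq ι] [Semiring α]
    {M : Matrix ι ι α} {P : ι → Prop} (hP : ∀ i j, M i j ≠ 0 → P i → P j) {k : ℕ} {i j : ι}
    (hk : (M ^ k) i j ≠ 0) (hi : P i) : P j := by
  induction k generalizing j with
  | zero =>
    rw [pow_zero] at hk
    by_contra hj
    exact hk (Matrix.one_apply_ne fun hij => hj (hij ▸ hi))
  | succ k ih =>
    rw [pow_succ, Matrix.mul_apply] at hk
    obtain ⟨l, -, hl⟩ := Finset.exists_ne_zero_of_sum_ne_zero hk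
    exact hP l j (right_ne_zero_of_mul hl) (ih (left_ne_zero_of_mul hl))

lemma interior_nonempty_of_pow_pos (hp : ∀ i, IsClosed (p i)) (hlam : lam ≠ 0)
    {M : Matrix (Fin n) (Fin n) ℕ} (hM : ∀ i j, M i j = countCopies E (p i) (S j).tiles)
    {k : ℕ} (hk : ∀ i j, 0 < (M ^ k) i j) (T : PTiling E p univ) (j : Fin n) :
    (interior (p j)).Nonempty := by
  obtain ⟨i, hi⟩ := T.exists_interior_nonempty (by simp) hp
  exact of_matrix_pow_apply_ne_zero (P := fun i => (interior (p i)).Nonempty)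
    (fun i j hij => interior_nonempty_of_countCopies_ne_zero hlam (S j) (hM i j ▸ hij))
    (hk i j).ne' hi

end Tilings

/-- for a primitive substitution rule `S`, the substitution map `I_S`
restricted to `Ω_S` is onto `Ω_S`; consequently every admissible tiling admits a
hierarchical sequence. -/
theorem stmt_11 (E : Subgroup (Plane ≃ᵢ Plane)) (hE : ContainsTranslations E)
    {n : ℕ} (p : Fin n → Set Plane) (hp : ∀ i, IsTile (p i))
    (lam : ℝ) (hlam : 1 < lam)
    (S : ∀ i, PTiling E p (scale lam (p i)))
    (M : Matrix (Fin n) (Fin n) ℕ)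
    (hM : ∀ i j, M i j = countCopies E (p i) (S j).tiles)
    (hprim : ∃ k : ℕ, 0 < k ∧ ∀ i j, 0 < (M ^ k) i j) :
    -- `I_S` restricted to `Ω_S` is onto `Ω_S`
    (∀ T : PTiling E p Set.univ, Admissible E p lam S T →
      ∃ T' : PTiling E p Set.univ, Admissible E p lam S T' ∧
        SubstImage E p lam S T' T) ∧
    -- every admissible tiling admits a hierarchical sequence
    (∀ T : PTiling E p Set.univ, Admissible E p lam S T →
      ∃ Tseq : ∀ l : ℕ, PTiling E (scaledP p lam l) Set.univ,
        (Tseq 0).tiles = T.tiles ∧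
        ∀ l : ℕ, DecompImage E p lam S l (Tseq (l + 1)) (Tseq l)) := by
  have hlam0 : lam ≠ 0 := by positivity
  obtain ⟨k, -, hk⟩ := hprim
  exact forall₂_and.1 fun T hT => stmt_11_general hE (fun i => (hp i).isCompact)
    (interior_nonempty_of_pow_pos (fun i => (hp i).1) hlam0 hM hk T) hlam0 hT
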